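/- arXiv:1902.05217 — 5 statements merged into one kernel-verified Lean document; each statement's English description precedes it below -/
import Mathlib

section
/- Let S be a nonempty finite set, let d : S → ℝ with d_s ≠ 0 for all s ∈ S, and for each s ∈ S let P_s be a 2^n × 2^n complex matrix that is a Kronecker product of n matrices each belonging to {I₂, X, Z} (so each P_s is Hermitian with P_s² = I). Let σ be a density matrix of size 2^n × 2^n, let H = Σ_{s∈S} d_s·P_s, and let D = Σ_{s∈S} |d_s| (so D > 0). Then Σ_{s∈S} (|d_s|/D) · (1 − sign(d_s)·Re Tr(P_s σ))/2 = 1/2 − Re Tr(H σ)/(2D). (The left-hand side is the probability, when a term s is drawn with probability |d_s|/D and the ±1-valued observable P_s is measured on the state σ, that the outcome equals −sign(d_s).) -/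
open Matrix BigOperators
open scoped ComplexOrder

noncomputable def pauliX : Matrix (Fin 2) (Fin 2) ℂ := !![0, 1; 1, 0]
noncomputable def pauliZ : Matrix (Fin 2) (Fin 2) ℂ := !![1, 0; 0, -1]

/-- The Kronecker product of a family of `n` 2×2 matrices, as a `2^n × 2^n` matrix
whose rows and columns are indexed by bit strings of length `n`. -/
noncomputable def kronPowFam {n : ℕ} (M : Fin n → Matrix (Fin 2) (Fin 2) ℂ) :
    Matrix (Fin n → Fin 2) (Fin n → Fin 2) ℂ :=
  Matrix.of fun x y => ∏ i, M i (x i) (y i)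

theorem stmt0 {S : Type*} [Fintype S] [Nonempty S] (n : ℕ)
    (d : S → ℝ) (hd : ∀ s, d s ≠ 0)
    (P : S → Matrix (Fin n → Fin 2) (Fin n → Fin 2) ℂ)
    (hP : ∀ s, ∃ M : Fin n → Matrix (Fin 2) (Fin 2) ℂ,
      (∀ i, M i = 1 ∨ M i = pauliX ∨ M i = pauliZ) ∧ P s = kronPowFam M)
    (σ : Matrix (Fin n → Fin 2) (Fin n → Fin 2) ℂ)
    (hσ : σ.PosSemidef) (hσtr : σ.trace = 1)
    (H : Matrix (Fin n → Fin 2) (Fin n → Fin 2) ℂ)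
    (hH : H = ∑ s, (d s : ℂ) • P s)
    (D : ℝ) (hD : D = ∑ s, |d s|) :
    ∑ s, (|d s| / D) * ((1 - Real.sign (d s) * ((P s * σ).trace).re) / 2)
      = 1 / 2 - ((H * σ).trace).re / (2 * D) := by
  have hDpos : 0 < D := by
    rw [hD]
    exact Finset.sum_pos (fun s _ => abs_pos.mpr (hd s)) Finset.univ_nonempty
  have hDne : D ≠ 0 := hDpos.ne'
  have hsign : ∀ s, |d s| * Real.sign (d s) = d s := by
    intro s
    rcases lt_or_gt_of_ne (hd s) with h | h
    · rw [Real.sign_of_neg h, abs_of_neg h]; ring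
    · rw [Real.sign_of_pos h, abs_of_pos h]; ring
  have htr : ((H * σ).trace).re = ∑ s, d s * ((P s * σ).trace).re := by
    rw [hH, Finset.sum_mul, Matrix.trace_sum, Complex.re_sum]
    refine Finset.sum_congr rfl fun s _ => ?_
    rw [Matrix.smul_mul, Matrix.trace_smul, smul_eq_mul, Complex.re_ofReal_mul]
  have hterm : ∀ s, (|d s| / D) * ((1 - Real.sign (d s) * ((P s * σ).trace).re) / 2)
      = |d s| * (1 / (2 * D)) - d s * ((P s * σ).trace).re * (1 / (2 * D)) := by
    intro s
    have h := hsign s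
    field_simp
    linear_combination (-((P s * σ).trace).re) * h
  rw [Finset.sum_congr rfl fun s _ => hterm s, Finset.sum_sub_distrib, ← Finset.sum_mul,
    ← Finset.sum_mul, ← hD, ← htr]
  field_simp
end

section
/- Let S be a nonempty finite set, let d : S → ℝ with d_s ≠ 0 for all s ∈ S, and for each s ∈ S let P_s be a 2^n × 2^n complex matrix that is a Kronecker product of n matrices each belonging to {I₂, X, Z}. Let σ be a density matrix of size 2^n × 2^n, let H = Σ_{s∈S} d_s·P_s, let D = Σ_{s∈S} |d_s|, and let a ∈ ℝ. If Re Tr(H σ) ≤ a, then Σ_{s∈S} (|d_s|/D) · (1 − sign(d_s)·Re Tr(P_s σ))/2 ≥ 1/2 − a/(2D). (In a yes-instance of the 2-local XZ Hamiltonian problem, the per-round probability that the honest prover's measurement outcome equals −sign(d_s) is at least 1/2 − a/(2·Σ_s|d_s|).) -/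
open Matrix BigOperators
open scoped ComplexOrder

theorem stmt1 {S : Type*} [Fintype S] [Nonempty S] (n : ℕ)
    (d : S → ℝ) (hd : ∀ s, d s ≠ 0)
    (P : S → Matrix (Fin n → Fin 2) (Fin n → Fin 2) ℂ)
    (hP : ∀ s, ∃ M : Fin n → Matrix (Fin 2) (Fin 2) ℂ,
      (∀ i, M i = 1 ∨ M i = pauliX ∨ M i = pauliZ) ∧ P s = kronPowFam M)
    (σ : Matrix (Fin n → Fin 2) (Fin n → Fin 2) ℂ)
    (hσ : σ.PosSemidef) (hσtr : σ.trace = 1)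
    (H : Matrix (Fin n → Fin 2) (Fin n → Fin 2) ℂ)
    (hH : H = ∑ s, (d s : ℂ) • P s)
    (D : ℝ) (hD : D = ∑ s, |d s|) (a : ℝ)
    (ha : ((H * σ).trace).re ≤ a) :
    1 / 2 - a / (2 * D)
      ≤ ∑ s, (|d s| / D) * ((1 - Real.sign (d s) * ((P s * σ).trace).re) / 2) := by
  have hDpos : 0 < D := by
    rw [hD]
    exact Finset.sum_pos (fun s _ => abs_pos.mpr (hd s)) Finset.univ_nonempty
  have htr : ((H * σ).trace).re = ∑ s, d s * ((P s * σ).trace).re := by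
    rw [hH, Finset.sum_mul, Matrix.trace_sum, Complex.re_sum]
    refine Finset.sum_congr rfl fun s _ => ?_
    rw [Matrix.smul_mul, Matrix.trace_smul, smul_eq_mul, Complex.re_ofReal_mul]
  have hterm : ∀ s, (|d s| / D) * ((1 - Real.sign (d s) * ((P s * σ).trace).re) / 2)
      = (|d s| - d s * ((P s * σ).trace).re) / (2 * D) := by
    intro s
    have h : |d s| * Real.sign (d s) = d s := by
      rcases lt_or_gt_of_ne (hd s) with h | h
      · rw [abs_of_neg h, Real.sign_of_neg h]; ring
      · rw [abs_of_pos h, Real.sign_of_pos h]; ring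
    have h2 : d s * ((P s * σ).trace).re
        = |d s| * Real.sign (d s) * ((P s * σ).trace).re := by rw [h]
    rw [h2]
    field_simp
  rw [Finset.sum_congr rfl fun s _ => hterm s, ← Finset.sum_div, Finset.sum_sub_distrib,
    ← hD, ← htr]
  have e : 1 / 2 - a / (2 * D) = (D - a) / (2 * D) := by field_simp
  rw [e]
  gcongr
end

section
/- Let S be a nonempty finite set, let d : S → ℝ with d_s ≠ 0 for all s ∈ S, and for each s ∈ S let P_s be a 2^n × 2^n complex matrix that is a Kronecker product of n matrices each belonging to {I₂, X, Z}. Let σ be a density matrix of size 2^n × 2^n, let H = Σ_{s∈S} d_s·P_s, let D = Σ_{s∈S} |d_s|, and let b ∈ ℝ. If Re Tr(H σ) ≥ b, then Σ_{s∈S} (|d_s|/D) · (1 − sign(d_s)·Re Tr(P_s σ))/2 ≤ 1/2 − b/(2D). (In a no-instance of the 2-local XZ Hamiltonian problem, the per-round probability that the prover's measurement outcome equals −sign(d_s) is at most 1/2 − b/(2·Σ_s|d_s|), for any witness state sent by the prover.) -/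
open Matrix BigOperators
open scoped ComplexOrder

theorem stmt2 {S : Type*} [Fintype S] [Nonempty S] (n : ℕ)
    (d : S → ℝ) (hd : ∀ s, d s ≠ 0)
    (P : S → Matrix (Fin n → Fin 2) (Fin n → Fin 2) ℂ)
    (hP : ∀ s, ∃ M : Fin n → Matrix (Fin 2) (Fin 2) ℂ,
      (∀ i, M i = 1 ∨ M i = pauliX ∨ M i = pauliZ) ∧ P s = kronPowFam M)
    (σ : Matrix (Fin n → Fin 2) (Fin n → Fin 2) ℂ)
    (hσ : σ.PosSemidef) (hσtr : σ.trace = 1)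
    (H : Matrix (Fin n → Fin 2) (Fin n → Fin 2) ℂ)
    (hH : H = ∑ s, (d s : ℂ) • P s)
    (D : ℝ) (hD : D = ∑ s, |d s|) (b : ℝ)
    (hb : b ≤ ((H * σ).trace).re) :
    ∑ s, (|d s| / D) * ((1 - Real.sign (d s) * ((P s * σ).trace).re) / 2)
      ≤ 1 / 2 - b / (2 * D) := by
  have hDpos : 0 < D := by
    rw [hD]
    exact Finset.sum_pos (fun s _ => abs_pos.mpr (hd s)) Finset.univ_nonempty
  have htr : ((H * σ).trace).re = ∑ s, d s * ((P s * σ).trace).re := by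
    rw [hH, Finset.sum_mul, Matrix.trace_sum, Complex.re_sum]
    refine Finset.sum_congr rfl fun s _ => ?_
    rw [Matrix.smul_mul, Matrix.trace_smul, smul_eq_mul, Complex.re_ofReal_mul]
  have hterm : ∀ s, (|d s| / D) * ((1 - Real.sign (d s) * ((P s * σ).trace).re) / 2)
      = (|d s| - d s * ((P s * σ).trace).re) / (2 * D) := by
    intro s
    have h : |d s| * Real.sign (d s) = d s := by
      rcases lt_or_gt_of_ne (hd s) with h | h
      · rw [abs_of_neg h, Real.sign_of_neg h]; ring
      · rw [abs_of_pos h, Real.sign_of_pos h]; ring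
    rw [div_mul_div_comm, mul_comm D 2, mul_sub, mul_one, ← mul_assoc, h]
  rw [Finset.sum_congr rfl fun s _ => hterm s, ← Finset.sum_div, Finset.sum_sub_distrib,
    ← htr, ← hD]
  have h2 : (1 : ℝ) / 2 - b / (2 * D) = (D - b) / (2 * D) := by
    field_simp
  rw [h2]
  gcongr
end

section
/- Let N ≥ 1 be odd, and let C be a 2×2 unitary matrix such that there exist a bijection φ of the set {X, Y, Z} and signs ε : {X,Y,Z} → {+1, −1} with C·P·C* = ε(P)·φ(P) for every P ∈ {X, Y, Z} (i.e. C is a single-qubit Clifford operation; for instance C = H, the Hadamard matrix, or C = I₂). Then for every 2^N×2^N complex matrix σ: Ξ_N( C^{⊗N} σ (C^{⊗N})* ) = C · Ξ_N(σ) · C*. (This is the transversality identity, equation (35) of Broadbent–Ji–Song–Watrous, specialized to the single-qubit Clifford gates H and I used in the map U_r; the concatenated Steane code has N = 7^t, which is odd.) -/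
open Matrix BigOperators

noncomputable def pauliY : Matrix (Fin 2) (Fin 2) ℂ := !![0, -Complex.I; Complex.I, 0]
/-- The `N`-fold Kronecker power of a 2×2 matrix, as a `2^N × 2^N` matrix whose rows and
columns are indexed by bit strings of length `N`. -/
noncomputable def kronPow (N : ℕ) (A : Matrix (Fin 2) (Fin 2) ℂ) :
    Matrix (Fin N → Fin 2) (Fin N → Fin 2) ℂ :=
  Matrix.of fun x y => ∏ i, A (x i) (y i)

/-- The Hilbert–Schmidt inner product `⟨A, B⟩ = Tr(A* B)`. -/
noncomputable def hsInner {m : Type*} [Fintype m] (A B : Matrix m m ℂ) : ℂ := (Aᴴ * B).trace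

/-- The map `Ξ_N(σ) = (⟨I₂^{⊗N},σ⟩ I₂ + ⟨X^{⊗N},σ⟩ X + ⟨Y^{⊗N},σ⟩ Y + ⟨Z^{⊗N},σ⟩ Z)/2`. -/
noncomputable def Xi (N : ℕ) (σ : Matrix (Fin N → Fin 2) (Fin N → Fin 2) ℂ) :
    Matrix (Fin 2) (Fin 2) ℂ :=
  (1 / 2 : ℂ) • (hsInner (kronPow N 1) σ • 1 + hsInner (kronPow N pauliX) σ • pauliX
    + hsInner (kronPow N pauliY) σ • pauliY + hsInner (kronPow N pauliZ) σ • pauliZ)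

/-- The three Pauli matrices `X`, `Y`, `Z`, indexed by `Fin 3`. -/
noncomputable def pauli : Fin 3 → Matrix (Fin 2) (Fin 2) ℂ := ![pauliX, pauliY, pauliZ]

theorem kronPow_mul (N : ℕ) (A B : Matrix (Fin 2) (Fin 2) ℂ) :
    kronPow N (A * B) = kronPow N A * kronPow N B := by
  ext x y
  simp only [kronPow, Matrix.of_apply, Matrix.mul_apply]
  rw [Finset.prod_univ_sum]
  simp [Finset.prod_mul_distrib]

theorem kronPow_conjTranspose (N : ℕ) (A : Matrix (Fin 2) (Fin 2) ℂ) :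
    kronPow N Aᴴ = (kronPow N A)ᴴ := by
  ext x y
  simp [kronPow, Matrix.conjTranspose_apply]

theorem kronPow_smul (N : ℕ) (c : ℂ) (A : Matrix (Fin 2) (Fin 2) ℂ) :
    kronPow N (c • A) = c ^ N • kronPow N A := by
  ext x y
  simp [kronPow, Finset.prod_mul_distrib]

theorem hsInner_conj {m : Type*} [Fintype m] (A U S : Matrix m m ℂ) :
    hsInner A (U * S * Uᴴ) = hsInner (Uᴴ * A * U) S := by
  simp only [hsInner, Matrix.conjTranspose_mul, Matrix.conjTranspose_conjTranspose]
  rw [← Matrix.mul_assoc, Matrix.trace_mul_comm]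
  simp only [Matrix.mul_assoc]

theorem Xi_eq (N : ℕ) (σ : Matrix (Fin N → Fin 2) (Fin N → Fin 2) ℂ) :
    Xi N σ = (1 / 2 : ℂ) • (hsInner (kronPow N 1) σ • 1 +
      ∑ i, hsInner (kronPow N (pauli i)) σ • pauli i) := by
  simp [Xi, Fin.sum_univ_three, pauli, add_assoc]

theorem stmt9 (N : ℕ) (hN : 1 ≤ N) (hodd : Odd N)
    (C : Matrix (Fin 2) (Fin 2) ℂ) (hC1 : C * Cᴴ = 1) (hC2 : Cᴴ * C = 1)
    (φ : Equiv.Perm (Fin 3)) (ε : Fin 3 → ℝ) (hε : ∀ i, ε i = 1 ∨ ε i = -1)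
    (hCliff : ∀ i, C * pauli i * Cᴴ = ((ε i : ℂ)) • pauli (φ i))
    (σ : Matrix (Fin N → Fin 2) (Fin N → Fin 2) ℂ) :
    Xi N (kronPow N C * σ * (kronPow N C)ᴴ) = C * Xi N σ * Cᴴ := by
  have key : ∀ A, hsInner (kronPow N A) (kronPow N C * σ * (kronPow N C)ᴴ)
      = hsInner (kronPow N (Cᴴ * A * C)) σ := by
    intro A
    rw [hsInner_conj, kronPow_mul, kronPow_mul, kronPow_conjTranspose]
  have hee : ∀ i, (ε i : ℂ) * (ε i : ℂ) = 1 := by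
    intro i
    rcases hε i with h | h <;> simp [h]
  have hinv : ∀ i, Cᴴ * pauli (φ i) * C = (ε i : ℂ) • pauli i := by
    intro i
    have h1 : pauli (φ i) = (ε i : ℂ) • (C * pauli i * Cᴴ) := by
      rw [hCliff, smul_smul, hee, one_smul]
    have h2 : Cᴴ * (C * pauli i * Cᴴ) * C = (Cᴴ * C) * pauli i * (Cᴴ * C) := by
      simp only [Matrix.mul_assoc]
    rw [h1, Matrix.mul_smul, Matrix.smul_mul, h2, hC2, Matrix.one_mul, Matrix.mul_one]
  have hs : ∀ i, hsInner (kronPow N ((ε i : ℂ) • pauli i)) σ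
      = (ε i : ℂ) * hsInner (kronPow N (pauli i)) σ := by
    intro i
    rw [kronPow_smul]
    rcases hε i with h | h <;> simp [h, hsInner, hodd.neg_one_pow]
  rw [Xi_eq, Xi_eq]
  simp only [key]
  rw [← Equiv.sum_comp φ]
  simp only [hinv, hs]
  rw [Matrix.mul_one, hC2, Matrix.mul_smul, Matrix.smul_mul, Matrix.mul_add, Matrix.add_mul,
    Matrix.mul_smul, Matrix.smul_mul, Matrix.mul_one, hC1, Finset.mul_sum, Finset.sum_mul]
  congr 2
  refine Finset.sum_congr rfl fun i _ => ?_
  rw [Matrix.mul_smul, Matrix.smul_mul, hCliff, smul_smul, mul_comm]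
end

section
/- Let N ≥ 1 and let L, T be subsets of {1, …, 2N} with |L| = N and |T| = w. Let π be a uniformly random permutation of {1, …, 2N}, and independently let M be a random subset of L in which each element of L is included independently with probability 1/2. Then the probability that the image π(T) contains no element of M, i.e. Pr[ π(T) ∩ M = ∅ ], is at most (3/4)^w. -/
/-- weight of a position -/
noncomputable def wt {n : ℕ} (L : Finset (Fin n)) (y : Fin n) : ℝ := if y ∈ L then 1 / 2 else 1

/-- number of elements of `T` sent into `L` -/
def hitc {n : ℕ} (L T : Finset (Fin n)) (π : Equiv.Perm (Fin n)) : ℕ :=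
  (T.filter (fun x => π x ∈ L)).card

lemma prod_wt {n : ℕ} (L T : Finset (Fin n)) (π : Equiv.Perm (Fin n)) :
    ∏ x ∈ T, wt L (π x) = (1 / 2 : ℝ) ^ hitc L T π := by
  simp only [wt, hitc]
  rw [Finset.prod_ite]
  simp

lemma count_fix {n : ℕ} (L T : Finset (Fin n)) (π : Equiv.Perm (Fin n)) :
    (((Finset.univ : Finset (Fin n → Bool)).filter
      (fun M => ∀ x ∈ T, π x ∈ L → M (π x) = false)).card : ℝ)
      = 2 ^ n * ∏ x ∈ T, wt L (π x) := by
  have h : (Finset.univ : Finset (Fin n → Bool)).filter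
      (fun M => ∀ x ∈ T, π x ∈ L → M (π x) = false)
      = Fintype.piFinset (fun y => if π.symm y ∈ T ∧ y ∈ L then {false} else Finset.univ) := by
    ext M
    simp only [Finset.mem_filter, Finset.mem_univ, true_and, Fintype.mem_piFinset]
    constructor
    · intro h y
      split_ifs with hy
      · have := h _ hy.1
        simp only [Equiv.apply_symm_apply] at this
        simpa using this hy.2
      · simp
    · intro h x hx hL
      have := h (π x)
      rw [if_pos ⟨by simpa using hx, hL⟩] at this
      simpa using this
  rw [h, Fintype.card_piFinset]
  push_cast
  rw [← Equiv.prod_comp π, ← Finset.prod_filter_mul_prod_filter_not Finset.univ (fun x => x ∈ T)]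
  have e : (2 : ℝ) ^ n = (∏ x : Fin n with x ∈ T, 2) * ∏ x : Fin n with x ∉ T, 2 := by
    rw [Finset.prod_filter_mul_prod_filter_not]; simp
  rw [e, mul_right_comm]
  congr 1
  · have : T = Finset.univ.filter (fun x => x ∈ T) := by simp
    conv_rhs => rw [show ∏ x ∈ T, wt L (π x) = ∏ x : Fin n with x ∈ T, wt L (π x) by rw [← this]]
    rw [← Finset.prod_mul_distrib]
    apply Finset.prod_congr rfl
    intro x hx
    have hx : x ∈ T := by simpa using hx
    by_cases h : π x ∈ L <;> simp [wt, h, hx]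
  · apply Finset.prod_congr rfl
    intro x hx
    have hx : x ∉ T := by simpa using hx
    simp [hx]

lemma sum_single {N : ℕ} (hN : 1 ≤ N) (L : Finset (Fin (2 * N))) (hL : L.card = N)
    (x : Fin (2 * N)) :
    ∑ π : Equiv.Perm (Fin (2 * N)), (if π x ∈ L then (1 : ℝ) else 0)
      = ((2 * N).factorial : ℝ) / 2 := by
  have h1 : ∀ y, ∑ π : Equiv.Perm (Fin (2 * N)), (if π y ∈ L then (1 : ℝ) else 0)
      = ∑ π : Equiv.Perm (Fin (2 * N)), (if π x ∈ L then (1 : ℝ) else 0) := by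
    intro y
    rw [← Equiv.sum_comp (Equiv.mulRight (Equiv.swap x y))]
    simp
  have h2 : ∑ y, ∑ π : Equiv.Perm (Fin (2 * N)), (if π y ∈ L then (1 : ℝ) else 0)
      = (2 * N).factorial * N := by
    rw [Finset.sum_comm]
    have : ∀ π : Equiv.Perm (Fin (2 * N)), ∑ y, (if π y ∈ L then (1 : ℝ) else 0) = N := by
      intro π
      rw [Equiv.sum_comp π (fun y => if y ∈ L then (1 : ℝ) else 0)]
      simp [hL]
    simp [this, Fintype.card_perm]
  simp only [h1] at h2
  rw [Finset.sum_const, Finset.card_univ, Fintype.card_fin, nsmul_eq_mul] at h2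
  push_cast at h2
  have : (N : ℝ) ≠ 0 := by positivity
  apply mul_left_cancel₀ this
  linarith

lemma sum_hit {N : ℕ} (hN : 1 ≤ N) (L T : Finset (Fin (2 * N))) (hL : L.card = N) :
    ∑ π : Equiv.Perm (Fin (2 * N)), ((hitc L T π : ℝ) - T.card / 2) = 0 := by
  have : ∀ π : Equiv.Perm (Fin (2 * N)), (hitc L T π : ℝ)
      = ∑ x ∈ T, (if π x ∈ L then (1 : ℝ) else 0) := by
    intro π; simp [hitc]
  simp only [this]
  rw [Finset.sum_sub_distrib, Finset.sum_comm]
  simp only [sum_single hN L hL]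
  simp [Fintype.card_perm]
  ring

lemma cheb {N : ℕ} (hN : 1 ≤ N) (L T : Finset (Fin (2 * N))) (hL : L.card = N) :
    ∑ π : Equiv.Perm (Fin (2 * N)),
      (1 / 2 : ℝ) ^ hitc L T π * ((hitc L T π : ℝ) - T.card / 2) ≤ 0 := by
  set s : ℝ := √(1 / 2)
  have hs : s ^ 2 = 1 / 2 := Real.sq_sqrt (by norm_num)
  have s0 : 0 ≤ s := Real.sqrt_nonneg _
  have s1 : s ≤ 1 := by nlinarith
  calc _ ≤ ∑ π : Equiv.Perm (Fin (2 * N)), s ^ T.card * ((hitc L T π : ℝ) - T.card / 2) := by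
        apply Finset.sum_le_sum
        intro π _
        rw [← hs, ← pow_mul]
        rcases le_total T.card (2 * hitc L T π) with h | h
        · have h' : (T.card : ℝ) ≤ 2 * hitc L T π := by exact_mod_cast h
          exact mul_le_mul_of_nonneg_right (pow_le_pow_of_le_one s0 s1 h) (by linarith)
        · have h' : (2 * hitc L T π : ℝ) ≤ T.card := by exact_mod_cast h
          exact mul_le_mul_of_nonpos_right (pow_le_pow_of_le_one s0 s1 h) (by linarith)
    _ = 0 := by rw [← Finset.mul_sum, sum_hit hN L T hL, mul_zero]

lemma step {N : ℕ} (hN : 1 ≤ N) (L T : Finset (Fin (2 * N))) (hL : L.card = N)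
    (x : Fin (2 * N)) (hx : x ∉ T) :
    ∑ π : Equiv.Perm (Fin (2 * N)), ∏ y ∈ insert x T, wt L (π y)
      ≤ 3 / 4 * ∑ π : Equiv.Perm (Fin (2 * N)), ∏ y ∈ T, wt L (π y) := by
  have h1 : ∀ z ∈ Tᶜ, ∑ π : Equiv.Perm (Fin (2 * N)), wt L (π z) * ∏ y ∈ T, wt L (π y)
      = ∑ π : Equiv.Perm (Fin (2 * N)), wt L (π x) * ∏ y ∈ T, wt L (π y) := by
    intro z hz
    rw [← Equiv.sum_comp (Equiv.mulRight (Equiv.swap x z))]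
    apply Finset.sum_congr rfl
    intro π _
    simp only [Equiv.coe_mulRight, Equiv.Perm.mul_apply, Equiv.swap_apply_right]
    congr 1
    apply Finset.prod_congr rfl
    intro y hy
    rw [Equiv.swap_apply_of_ne_of_ne]
    · rintro rfl; exact hx hy
    · rintro rfl; simp at hz; exact hz hy
  have h2 := Finset.sum_congr rfl h1
  rw [Finset.sum_comm, Finset.sum_const, nsmul_eq_mul] at h2
  have hk : T.card < 2 * N := by
    have := Finset.card_lt_univ_of_notMem hx
    simpa using this
  have hc : ((Tᶜ).card : ℝ) = 2 * N - T.card := by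
    rw [Finset.card_compl, Fintype.card_fin, Nat.cast_sub hk.le]; push_cast; ring
  have h3 : ∀ π : Equiv.Perm (Fin (2 * N)),
      ∑ z ∈ Tᶜ, wt L (π z) = 2 * N - T.card - (N - hitc L T π) / 2 := by
    intro π
    have w1 : ∀ y, wt L y = 1 - (if y ∈ L then (1 : ℝ) else 0) / 2 := by
      intro y; unfold wt; split_ifs <;> norm_num
    have a1 : ∑ z, (if π z ∈ L then (1 : ℝ) else 0) = N := by
      rw [Equiv.sum_comp π (fun y => if y ∈ L then (1 : ℝ) else 0)]
      simp [hL]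
    have a2 : ∑ z ∈ T, (if π z ∈ L then (1 : ℝ) else 0) = hitc L T π := by simp [hitc]
    have a3 := Finset.sum_add_sum_compl T (fun z => if π z ∈ L then (1 : ℝ) else 0)
    simp only [w1]
    rw [Finset.sum_sub_distrib, ← Finset.sum_div, Finset.sum_const, nsmul_eq_mul, hc]
    linarith
  simp only [← Finset.sum_mul, h3] at h2
  simp only [Finset.prod_insert hx]
  have hpos : (0 : ℝ) < 2 * N - T.card := by
    have : (T.card : ℝ) < 2 * N := by exact_mod_cast hk
    linarith
  apply le_of_mul_le_mul_left _ hpos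
  rw [← hc, ← h2, hc]
  have hch := cheb hN L T hL
  simp only [prod_wt]
  have : ∑ π : Equiv.Perm (Fin (2 * N)),
        (2 * (N : ℝ) - T.card - (N - hitc L T π) / 2) * (1 / 2 : ℝ) ^ hitc L T π
      = (2 * N - T.card) * (3 / 4 * ∑ π : Equiv.Perm (Fin (2 * N)), (1 / 2 : ℝ) ^ hitc L T π)
        + 1 / 2 * ∑ π : Equiv.Perm (Fin (2 * N)),
      (1 / 2 : ℝ) ^ hitc L T π * ((hitc L T π : ℝ) - T.card / 2) := by
    simp only [Finset.mul_sum]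
    rw [← Finset.sum_add_distrib]
    apply Finset.sum_congr rfl
    intro π _
    ring
  rw [this]
  linarith

lemma main_bound {N : ℕ} (hN : 1 ≤ N) (L T : Finset (Fin (2 * N))) (hL : L.card = N) :
    ∑ π : Equiv.Perm (Fin (2 * N)), ∏ y ∈ T, wt L (π y)
      ≤ (3 / 4) ^ T.card * ((2 * N).factorial : ℝ) := by
  induction T using Finset.induction_on with
  | empty => simp [Fintype.card_perm]
  | insert x T hx ih =>
    rw [Finset.card_insert_of_notMem hx, pow_succ]
    have := step hN L T hL x hx
    linarith

theorem stmt15 (N : ℕ) (hN : 1 ≤ N) (L T : Finset (Fin (2 * N)))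
    (hL : L.card = N) (w : ℕ) (hT : T.card = w) :
    ((Finset.univ.filter (fun p : Equiv.Perm (Fin (2 * N)) × (Fin (2 * N) → Bool) =>
          ∀ x ∈ T, p.1 x ∈ L → p.2 (p.1 x) = false)).card : ℝ)
        / ((Finset.univ : Finset (Equiv.Perm (Fin (2 * N)) × (Fin (2 * N) → Bool))).card : ℝ)
      ≤ (3 / 4 : ℝ) ^ w := by
  subst hT
  have h := main_bound hN L T hL
  have e : ((Finset.univ.filter (fun p : Equiv.Perm (Fin (2 * N)) × (Fin (2 * N) → Bool) =>
          ∀ x ∈ T, p.1 x ∈ L → p.2 (p.1 x) = false)).card : ℝ)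
      = 2 ^ (2 * N) * ∑ π : Equiv.Perm (Fin (2 * N)), ∏ y ∈ T, wt L (π y) := by
    rw [Finset.mul_sum]
    simp only [← count_fix]
    rw [Finset.card_filter, Fintype.sum_prod_type]
    push_cast
    apply Finset.sum_congr rfl
    intro π _
    rw [Finset.card_filter]
    push_cast
    rfl
  have c : ((Finset.univ : Finset (Equiv.Perm (Fin (2 * N)) × (Fin (2 * N) → Bool))).card : ℝ)
      = 2 ^ (2 * N) * ((2 * N).factorial : ℝ) := by
    rw [Finset.card_univ, Fintype.card_prod, Fintype.card_perm]
    simp [mul_comm]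
  rw [e, c, div_le_iff₀ (by positivity)]
  calc _ ≤ (2 : ℝ) ^ (2 * N) * ((3 / 4) ^ T.card * ((2 * N).factorial : ℝ)) := by gcongr
    _ = _ := by ring
end
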